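/- Let η : [0,T] → V be continuous; let β : [0,T] → V be continuously differentiable with Dα(β̇(t)) − Cα(β(t)) + T⁻¹ Ĉ(η(t)) = 0 for all t ∈ [0,T] and β(T) = 0; and let a : [0,T] → V be continuously differentiable with Dα(ȧ(t)) + Cα(a(t)) = Dα(β(t) + T·β̇(t)) for all t ∈ [0,T] and a(0) = 0. Define S(t) := (C_I + T⁻¹·D_I)(η(t)) + Ĉᵀ(a(t) − T·β(t)). Then ∫₀ᵀ ⟨S(t), η(t)⟩ dt = ∫₀ᵀ { ⟨η(t), (Cε^S + T⁻¹·D_I)(η(t))⟩ + T·⟨β(t), Dα(β(t))⟩ + T²·⟨β̇(t), (Dα∘Cα⁻¹∘Dα)(β̇(t))⟩ } dt. In particular, if Cε^S and D_I are positive semidefinite, then ∫₀ᵀ ⟨S(t), η(t)⟩ dt ≥ 0. -/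

import Mathlib

open scoped RealInnerProductSpace

section Defs

variable {V : Type*} [NormedAddCommGroup V] [InnerProductSpace ℝ V] [FiniteDimensional ℝ V]

/-- `Ĉ := Cm − Cα ∘ Dα⁻¹ ∘ Dm`. -/
noncomputable def Chat (Cα Cm Dα Dm : V →L[ℝ] V) : V →L[ℝ] V :=
  Cm - Cα ∘L Ring.inverse Dα ∘L Dm

/-- The Schur complement `Cε^S := Cε − Cm ∘ Cα⁻¹ ∘ Cm`. -/
noncomputable def CSchur (Cε Cα Cm : V →L[ℝ] V) : V →L[ℝ] V :=
  Cε - Cm ∘L Ring.inverse Cα ∘L Cm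

/-- The instantaneous elasticity tensor `C_I := Cε^S + Ĉᵀ∘Cα⁻¹∘Ĉ`. -/
noncomputable def CInst (Cε Cα Cm Dα Dm : V →L[ℝ] V) : V →L[ℝ] V :=
  CSchur Cε Cα Cm +
    ContinuousLinearMap.adjoint (Chat Cα Cm Dα Dm) ∘L Ring.inverse Cα ∘L Chat Cα Cm Dα Dm

/-- The instantaneous viscosity tensor `D_I := Dε − Dm∘Dα⁻¹∘Dm`. -/
noncomputable def DInst (Dε Dα Dm : V →L[ℝ] V) : V →L[ℝ] V :=
  Dε - Dm ∘L Ring.inverse Dα ∘L Dm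

/-- The constitutive-gap stress
`S(t) := (C_I + T⁻¹·D_I)(η(t)) + Ĉᵀ(a(t) − T·β(t))`. -/
noncomputable def Sgap (Cε Cα Cm Dε Dα Dm : V →L[ℝ] V) (T : ℝ)
    (η β a : ℝ → V) (t : ℝ) : V :=
  (CInst Cε Cα Cm Dα Dm + T⁻¹ • DInst Dε Dα Dm) (η t) +
    ContinuousLinearMap.adjoint (Chat Cα Cm Dα Dm) (a t - T • β t)

end Defs

/-!
At each instant the first evolution equation collapses `Ĉᵀ Cα⁻¹ Ĉ η + Ĉᵀ (a - T β)` to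
`Ĉᵀ (a - T Cα⁻¹ Dα β̇)`. Pairing it with `η` means pairing `a - T Cα⁻¹ Dα β̇` with
`Ĉ η = T (Cα β - Dα β̇)`, and the second evolution equation eliminates `Cα a` from the result. What
remains is the two quadratic terms in `β` and `β̇` minus `T` times the derivative of `⟪Dα a, β⟫`,
whose integral vanishes because `a 0 = 0` and `β T = 0`.
-/

section RingInverse

variable {R M : Type*} [Semiring R] [AddCommMonoid M] [TopologicalSpace M] [Module R M]

theorem ringInverse_apply_apply {A : M →L[R] M} (hA : IsUnit A) (x : M) :
    Ring.inverse A (A x) = x :=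
  DFunLike.congr_fun (Ring.inverse_mul_cancel A hA) x

theorem apply_ringInverse_apply {A : M →L[R] M} (hA : IsUnit A) (x : M) :
    A (Ring.inverse A x) = x :=
  DFunLike.congr_fun (Ring.mul_inverse_cancel A hA) x

end RingInverse

theorem isUnit_of_inner_apply_self_ne_zero {𝕜 E : Type*} [RCLike 𝕜] [NormedAddCommGroup E]
    [InnerProductSpace 𝕜 E] [FiniteDimensional 𝕜 E] {A : E →L[𝕜] E}
    (hA : ∀ x, x ≠ 0 → inner 𝕜 (A x) x ≠ 0) : IsUnit A := by
  have : CompleteSpace E := FiniteDimensional.complete 𝕜 E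
  have injective : Function.Injective A := by
    refine (injective_iff_map_eq_zero A).2 fun x hx => ?_
    by_contra hx0
    exact hA x hx0 (by rw [hx, inner_zero_left])
  exact ContinuousLinearMap.isUnit_iff_bijective.2
    ⟨injective, LinearMap.injective_iff_surjective (f := A.toLinearMap).1 injective⟩

section InnerProductSpace

variable {W : Type*} [NormedAddCommGroup W] [InnerProductSpace ℝ W]

theorem inner_apply_self_nonneg_of_pos {A : W →L[ℝ] W} (hA : ∀ x, x ≠ 0 → 0 < ⟪A x, x⟫) (x : W) :
    0 ≤ ⟪A x, x⟫ := by
  rcases eq_or_ne x 0 with rfl | hx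
  · rw [inner_zero_right]
  · exact (hA x hx).le

theorem inner_comp_ringInverse_comp_nonneg {A D : W →L[ℝ] W} (hA : IsUnit A)
    (hD : D.IsSymmetric) (hA_nonneg : ∀ y, 0 ≤ ⟪A y, y⟫) (x : W) :
    0 ≤ ⟪x, (D ∘L Ring.inverse A ∘L D) x⟫ := by
  calc 0 ≤ ⟪A (Ring.inverse A (D x)), Ring.inverse A (D x)⟫ := hA_nonneg _
    _ = ⟪D x, Ring.inverse A (D x)⟫ := by rw [apply_ringInverse_apply hA]
    _ = ⟪x, (D ∘L Ring.inverse A ∘L D) x⟫ := hD x _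

theorem integral_inner_add_inner_eq_sub_of_hasDerivWithinAt {u v u' v' : ℝ → W} {p q : ℝ}
    (hu : ∀ t ∈ Set.uIcc p q, HasDerivWithinAt u (u' t) (Set.uIcc p q) t)
    (hv : ∀ t ∈ Set.uIcc p q, HasDerivWithinAt v (v' t) (Set.uIcc p q) t)
    (hint : IntervalIntegrable (fun t => ⟪u t, v' t⟫ + ⟪u' t, v t⟫) MeasureTheory.volume p q) :
    ∫ t in p..q, (⟪u t, v' t⟫ + ⟪u' t, v t⟫) = ⟪u q, v q⟫ - ⟪u p, v p⟫ := by
  have hderiv : ∀ t ∈ Set.uIcc p q, HasDerivWithinAt (fun t => ⟪u t, v t⟫)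
      (⟪u t, v' t⟫ + ⟪u' t, v t⟫) (Set.uIcc p q) t :=
    fun t ht => (hu t ht).inner ℝ (hv t ht)
  refine intervalIntegral.integral_eq_sub_of_hasDeriv_right
    (fun t ht => (hderiv t ht).continuousWithinAt) (fun t ht => ?_) hint
  exact ((hderiv t (Set.Ioo_subset_Icc_self ht)).hasDerivAt
    (Icc_mem_nhds ht.1 ht.2)).hasDerivWithinAt

theorem integral_inner_apply_add_inner_apply_eq_zero {U : Type*} [NormedAddCommGroup U]
    [NormedSpace ℝ U] {p q : ℝ} (hpq : p ≤ q) (D : U →L[ℝ] W) {u u' : ℝ → U} {v v' : ℝ → W}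
    (hu : ∀ t ∈ Set.Icc p q, HasDerivWithinAt u (u' t) (Set.Icc p q) t)
    (hv : ∀ t ∈ Set.Icc p q, HasDerivWithinAt v (v' t) (Set.Icc p q) t)
    (hint : IntervalIntegrable (fun t => ⟪D (u t), v' t⟫ + ⟪D (u' t), v t⟫)
      MeasureTheory.volume p q)
    (hup : u p = 0) (hvq : v q = 0) :
    ∫ t in p..q, (⟪D (u t), v' t⟫ + ⟪D (u' t), v t⟫) = 0 := by
  rw [← Set.uIcc_of_le hpq] at hu hv
  rw [integral_inner_add_inner_eq_sub_of_hasDerivWithinAt (u := fun t => D (u t)) (v := v)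
    (fun t ht => D.hasFDerivAt.comp_hasDerivWithinAt t (hu t ht)) hv hint,
    hup, hvq, map_zero, inner_zero_left, inner_zero_right, sub_zero]

theorem ringInverse_apply_smul_sub_add_sub {A D : W →L[ℝ] W} (hA : IsUnit A) (T : ℝ)
    (a b b' : W) :
    Ring.inverse A (T • (A b - D b')) + (a - T • b) = a - T • Ring.inverse A (D b') := by
  rw [map_smul, map_sub, ringInverse_apply_apply hA]
  module

theorem inner_sub_smul_ringInverse_apply_eq {A D : W →L[ℝ] W} (hA : A.IsSymmetric)
    (hD : D.IsSymmetric) (hAu : IsUnit A) {T : ℝ} {a a' b b' : W}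
    (ha : D a' + A a = D (b + T • b')) :
    ⟪a - T • Ring.inverse A (D b'), A b - D b'⟫ =
      ⟪b, D b⟫ + T * ⟪b', (D ∘L Ring.inverse A ∘L D) b'⟫ - (⟪D a, b'⟫ + ⟪D a', b⟫) := by
  have pairing_a : ⟪a, A b⟫ = ⟪b, D b⟫ + T * ⟪D b', b⟫ - ⟪D a', b⟫ := by
    have hAa : A a = D b + T • D b' - D a' := by
      rw [eq_sub_iff_add_eq', ha, map_add, map_smul]
    calc ⟪a, A b⟫ = ⟪A a, b⟫ := (hA a b).symm
      _ = ⟪b, D b⟫ + T * ⟪D b', b⟫ - ⟪D a', b⟫ := by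
        rw [hAa, inner_sub_left, inner_add_left, real_inner_smul_left, real_inner_comm b]
  have pairing_inverse : ⟪Ring.inverse A (D b'), A b⟫ = ⟪D b', b⟫ :=
    (hA _ b).symm.trans (congrArg (⟪·, b⟫) (apply_ringInverse_apply hAu _))
  have conj_eq : ⟪Ring.inverse A (D b'), D b'⟫ = ⟪b', (D ∘L Ring.inverse A ∘L D) b'⟫ :=
    (real_inner_comm _ _).trans (hD b' _)
  have symm_a : ⟪a, D b'⟫ = ⟪D a, b'⟫ := (hD a b').symm
  simp only [inner_sub_left, inner_sub_right, real_inner_smul_left, pairing_a, pairing_inverse,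
    conj_eq, symm_a]
  ring

end InnerProductSpace

section GapStress

variable {V W : Type*} [NormedAddCommGroup V] [InnerProductSpace ℝ V]
  [NormedAddCommGroup W] [InnerProductSpace ℝ W]

/-- The constitutive-gap stress of a strain `x` and internal states `a`, `b`, for an elastic
operator `E`, a viscous operator `F` and a coupling `K` into the space of internal variables.
`Sgap` is the case `E = Cε^S`, `F = D_I`, `K = Ĉ`, `A = Cα`. -/
noncomputable def gapStress [CompleteSpace V] [CompleteSpace W] (E F : V →L[ℝ] V)
    (K : V →L[ℝ] W) (A : W →L[ℝ] W) (T : ℝ) (x : V) (a b : W) : V :=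
  (E + K.adjoint ∘L Ring.inverse A ∘L K + T⁻¹ • F) x + K.adjoint (a - T • b)

/-- The quadratic density to which the power of the constitutive-gap stress integrates, at the
strain `x`, the internal state `b` and its rate `b'`. The case of interest is `E = Cε^S`,
`F = D_I`, `A = Cα`, `D = Dα`. -/
noncomputable def gapDissipation (E F : V →L[ℝ] V) (A D : W →L[ℝ] W) (T : ℝ) (x : V)
    (b b' : W) : ℝ :=
  ⟪x, (E + T⁻¹ • F) x⟫ + T * ⟪b, D b⟫ + T ^ 2 * ⟪b', (D ∘L Ring.inverse A ∘L D) b'⟫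

theorem gapDissipation_nonneg {E F : V →L[ℝ] V} {A D : W →L[ℝ] W} (hAu : IsUnit A)
    (hD : D.IsSymmetric) (hA_nonneg : ∀ y, 0 ≤ ⟪A y, y⟫) (hD_nonneg : ∀ y, 0 ≤ ⟪D y, y⟫)
    (hE_nonneg : ∀ x, 0 ≤ ⟪E x, x⟫) (hF_nonneg : ∀ x, 0 ≤ ⟪F x, x⟫) {T : ℝ} (hT : 0 ≤ T)
    (x : V) (b b' : W) : 0 ≤ gapDissipation E F A D T x b b' := by
  have rate_nonneg := inner_comp_ringInverse_comp_nonneg hAu hD hA_nonneg b'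
  have state_nonneg : 0 ≤ ⟪b, D b⟫ := (hD_nonneg b).trans_eq (real_inner_comm _ _)
  have strain_nonneg : 0 ≤ ⟪x, (E + T⁻¹ • F) x⟫ := by
    rw [real_inner_comm, add_apply, smul_apply, inner_add_left, real_inner_smul_left]
    exact add_nonneg (hE_nonneg x) (mul_nonneg (inv_nonneg.2 hT) (hF_nonneg x))
  unfold gapDissipation
  positivity

theorem continuousOn_gapDissipation (E F : V →L[ℝ] V) (A D : W →L[ℝ] W) (T : ℝ)
    {X : Type*} [TopologicalSpace X] {s : Set X} {η : X → V} {β β' : X → W}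
    (hη : ContinuousOn η s) (hβ : ContinuousOn β s) (hβ' : ContinuousOn β' s) :
    ContinuousOn (fun t => gapDissipation E F A D T (η t) (β t) (β' t)) s := by
  unfold gapDissipation
  fun_prop

variable [CompleteSpace V] [CompleteSpace W]

theorem inner_gapStress_self (E F : V →L[ℝ] V) (K : V →L[ℝ] W) (A : W →L[ℝ] W) (T : ℝ) (x : V)
    (a b : W) :
    ⟪gapStress E F K A T x a b, x⟫ =
      ⟪x, (E + T⁻¹ • F) x⟫ + ⟪Ring.inverse A (K x) + (a - T • b), K x⟫ := by
  rw [← ContinuousLinearMap.adjoint_inner_left K, real_inner_comm _ x, ← inner_add_left]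
  simp only [gapStress, add_apply, ContinuousLinearMap.comp_apply, map_add]
  congr 1
  abel

theorem inner_gapStress_self_eq_gapDissipation_sub (E F : V →L[ℝ] V) {K : V →L[ℝ] W}
    {A D : W →L[ℝ] W} (hA : A.IsSymmetric) (hD : D.IsSymmetric) (hAu : IsUnit A) {T : ℝ}
    (hT : T ≠ 0) {x : V} {a a' b b' : W} (hb : D b' - A b + T⁻¹ • K x = 0)
    (ha : D a' + A a = D (b + T • b')) :
    ⟪gapStress E F K A T x a b, x⟫ =
      gapDissipation E F A D T x b b' - T * (⟪D a, b'⟫ + ⟪D a', b⟫) := by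
  have hKx : K x = T • (A b - D b') := by
    rw [← inv_smul_eq_iff₀ hT, ← sub_eq_zero, ← hb]
    abel
  rw [inner_gapStress_self, hKx, ringInverse_apply_smul_sub_add_sub hAu, real_inner_smul_right,
    inner_sub_smul_ringInverse_apply_eq hA hD hAu ha, gapDissipation]
  ring

end GapStress

theorem stmt12_general {V W : Type*} [NormedAddCommGroup V] [InnerProductSpace ℝ V]
    [CompleteSpace V] [NormedAddCommGroup W] [InnerProductSpace ℝ W] [CompleteSpace W]
    (E F : V →L[ℝ] V) (K : V →L[ℝ] W) {A D : W →L[ℝ] W}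
    (hA : IsSelfAdjoint A) (hD : IsSelfAdjoint D) (hAu : IsUnit A)
    {T : ℝ} (hT : 0 < T) {η : ℝ → V} {β β' a a' : ℝ → W}
    (hη : ContinuousOn η (Set.Icc 0 T))
    (hβ : ∀ t ∈ Set.Icc 0 T, HasDerivWithinAt β (β' t) (Set.Icc 0 T) t)
    (hβ' : ContinuousOn β' (Set.Icc 0 T))
    (hβODE : ∀ t ∈ Set.Icc 0 T, D (β' t) - A (β t) + T⁻¹ • K (η t) = 0)
    (hβT : β T = 0)
    (ha : ∀ t ∈ Set.Icc 0 T, HasDerivWithinAt a (a' t) (Set.Icc 0 T) t)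
    (ha' : ContinuousOn a' (Set.Icc 0 T))
    (haODE : ∀ t ∈ Set.Icc 0 T, D (a' t) + A (a t) = D (β t + T • β' t))
    (ha0 : a 0 = 0) :
    (∫ t in (0 : ℝ)..T, ⟪gapStress E F K A T (η t) (a t) (β t), η t⟫) =
      (∫ t in (0 : ℝ)..T, gapDissipation E F A D T (η t) (β t) (β' t)) ∧
      ((∀ y, 0 ≤ ⟪A y, y⟫) → (∀ y, 0 ≤ ⟪D y, y⟫) → (∀ x, 0 ≤ ⟪E x, x⟫) → (∀ x, 0 ≤ ⟪F x, x⟫) →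
        0 ≤ ∫ t in (0 : ℝ)..T, ⟪gapStress E F K A T (η t) (a t) (β t), η t⟫) := by
  have hβc : ContinuousOn β (Set.Icc 0 T) := HasDerivWithinAt.continuousOn hβ
  have hac : ContinuousOn a (Set.Icc 0 T) := HasDerivWithinAt.continuousOn ha
  have dissipation_integrable :=
    (continuousOn_gapDissipation E F A D T hη hβc hβ').intervalIntegrable_of_Icc
      (μ := MeasureTheory.volume) hT.le
  have deriv_integrable : IntervalIntegrable (fun t => ⟪D (a t), β' t⟫ + ⟪D (a' t), β t⟫)
      MeasureTheory.volume 0 T :=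
    ContinuousOn.intervalIntegrable_of_Icc hT.le (by fun_prop)
  have work_eq : (∫ t in (0 : ℝ)..T, ⟪gapStress E F K A T (η t) (a t) (β t), η t⟫) =
      ∫ t in (0 : ℝ)..T, gapDissipation E F A D T (η t) (β t) (β' t) := by
    rw [intervalIntegral.integral_congr fun t ht =>
        have ht : t ∈ Set.Icc 0 T := Set.uIcc_of_le hT.le ▸ ht
        inner_gapStress_self_eq_gapDissipation_sub E F hA.isSymmetric hD.isSymmetric hAu hT.ne'
          (hβODE t ht) (haODE t ht),
      intervalIntegral.integral_sub dissipation_integrable (deriv_integrable.const_mul T),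
      intervalIntegral.integral_const_mul,
      integral_inner_apply_add_inner_apply_eq_zero hT.le D ha hβ deriv_integrable ha0 hβT,
      mul_zero, sub_zero]
  exact ⟨work_eq, fun hA_nonneg hD_nonneg hE_nonneg hF_nonneg => work_eq ▸
    intervalIntegral.integral_nonneg hT.le fun t _ => gapDissipation_nonneg hAu hD.isSymmetric
      hA_nonneg hD_nonneg hE_nonneg hF_nonneg hT.le (η t) (β t) (β' t)⟩

theorem stmt12 {V : Type*} [NormedAddCommGroup V] [InnerProductSpace ℝ V]
    [FiniteDimensional ℝ V]
    (Cε Cα Cm Dε Dα Dm : V →L[ℝ] V)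
    (hCε : IsSelfAdjoint Cε) (hCα : IsSelfAdjoint Cα) (hCm : IsSelfAdjoint Cm)
    (hDε : IsSelfAdjoint Dε) (hDα : IsSelfAdjoint Dα) (hDm : IsSelfAdjoint Dm)
    (hCαpos : ∀ x : V, x ≠ 0 → 0 < ⟪Cα x, x⟫)
    (hDαpos : ∀ x : V, x ≠ 0 → 0 < ⟪Dα x, x⟫)
    (T : ℝ) (hT : 0 < T)
    (η β β' a a' : ℝ → V)
    (hη : ContinuousOn η (Set.Icc 0 T))
    (hβ : ∀ t ∈ Set.Icc (0:ℝ) T, HasDerivWithinAt β (β' t) (Set.Icc 0 T) t)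
    (hβ' : ContinuousOn β' (Set.Icc 0 T))
    (hβODE : ∀ t ∈ Set.Icc (0:ℝ) T,
      Dα (β' t) - Cα (β t) + T⁻¹ • Chat Cα Cm Dα Dm (η t) = 0)
    (hβT : β T = 0)
    (ha : ∀ t ∈ Set.Icc (0:ℝ) T, HasDerivWithinAt a (a' t) (Set.Icc 0 T) t)
    (ha' : ContinuousOn a' (Set.Icc 0 T))
    (haODE : ∀ t ∈ Set.Icc (0:ℝ) T,
      Dα (a' t) + Cα (a t) = Dα (β t + T • β' t))
    (ha0 : a 0 = 0) :
    (∫ t in (0:ℝ)..T, ⟪Sgap Cε Cα Cm Dε Dα Dm T η β a t, η t⟫) =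
      (∫ t in (0:ℝ)..T,
        (⟪η t, (CSchur Cε Cα Cm + T⁻¹ • DInst Dε Dα Dm) (η t)⟫ +
          T * ⟪β t, Dα (β t)⟫ +
          T ^ 2 * ⟪β' t, (Dα ∘L Ring.inverse Cα ∘L Dα) (β' t)⟫)) ∧
      ((∀ x : V, 0 ≤ ⟪CSchur Cε Cα Cm x, x⟫) →
        (∀ x : V, 0 ≤ ⟪DInst Dε Dα Dm x, x⟫) →
        0 ≤ ∫ t in (0:ℝ)..T, ⟪Sgap Cε Cα Cm Dε Dα Dm T η β a t, η t⟫) := by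
  obtain ⟨work_eq, work_nonneg⟩ := stmt12_general (CSchur Cε Cα Cm) (DInst Dε Dα Dm)
    (Chat Cα Cm Dα Dm) hCα hDα
    (isUnit_of_inner_apply_self_ne_zero fun x hx => (hCαpos x hx).ne')
    hT hη hβ hβ' hβODE hβT ha ha' haODE ha0
  exact ⟨work_eq, work_nonneg (inner_apply_self_nonneg_of_pos hCαpos)
    (inner_apply_self_nonneg_of_pos hDαpos)⟩
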